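/- Fix an integer K ≥ 3 and ε ∈ (0,1/2). In ℝ², let φ_1 = (1,0)ᵀ, φ_2 = (0,1)ᵀ, and for each k = 3,…,K let φ_k = (a_k, b_k)ᵀ with a_k, b_k ∈ (−1,0) and a_k² + b_k² = 1. Let θ = (1, 1−ε)ᵀ. For ω in the simplex Δ_K = {ω ∈ ℝ^K : ω_k ≥ 0, Σ_k ω_k = 1}, let V_ω = Σ_{k=1}^K ω_k φ_k φ_kᵀ and, for k = 2,…,K, H_k(ω,θ) = inf{ ½ (θ−λ)ᵀ V_ω (θ−λ) : λ ∈ ℝ², λᵀφ_k ≥ λᵀφ_1 }. Then for every ω ∈ Δ_K with min_{k∈{2,…,K}} H_k(ω,θ) ≥ ε²/16 and every k ∈ {3,…,K}: H_k(ω,θ) ≥ (1−ε)²/16 ≥ 1/64. -/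

import Mathlib

/-!
Write `θ - λ = (x, y)` and `q(x, y) = ½ (x, y) V_ω (x, y)ᵀ = ½ ∑ ω_j ⟨φ_j, (x, y)⟩²`. The constraint
defining `H` for arm 2 is `x - y ≥ ε`, so by homogeneity near-optimality of `ω` for that arm alone says
`q(x, y) ≥ (x - y)² / 16` for all `(x, y)`. The off-diagonal entry of `V_ω` is nonnegative (arms 1 and 2
do not contribute, every other `φ_j` has two negative coordinates), so `q(x, y) ≥ q(x, -y)` when
`x y ≥ 0`; hence `q(x, y) ≥ (|x| + |y|)² / 16` always (`quad_lower`). For arm `k ≥ 3` the constraint is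
`(1 - a_k) x - b_k y ≥ (1 - a_k) - b_k (1 - ε)` with `0 < -b_k < 1 - a_k`, which forces `|x| + |y| ≥ 1`,
so its information is at least `1 / 16`.
-/

open Matrix BigOperators

/-- Design matrix `V_ω = Σ_k ω_k φ_k φ_kᵀ` for allocation `ω`. -/
noncomputable def designMatrix {K : ℕ} (φ : Fin K → Fin 2 → ℝ) (ω : Fin K → ℝ) :
    Matrix (Fin 2) (Fin 2) ℝ :=
  ∑ k : Fin K, ω k • Matrix.vecMulVec (φ k) (φ k)

/-- `H_k(ω,θ) = inf { ½(θ−λ)ᵀV_ω(θ−λ) : λᵀφ_k ≥ λᵀφ_i }`. -/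
noncomputable def Hinfo {K : ℕ} (φ : Fin K → Fin 2 → ℝ) (θ : Fin 2 → ℝ)
    (ω : Fin K → ℝ) (k i : Fin K) : ℝ :=
  sInf ((fun lam => (1 / 2 : ℝ) * ((θ - lam) ⬝ᵥ (designMatrix φ ω).mulVec (θ - lam))) ''
    {lam : Fin 2 → ℝ | lam ⬝ᵥ φ i ≤ lam ⬝ᵥ φ k})

/-- The quadratic form `½ vᵀ V_ω v` as a weighted sum of squares. -/
lemma half_design_quad_eq_sum {K : ℕ} (φ : Fin K → Fin 2 → ℝ) (ω : Fin K → ℝ) (v : Fin 2 → ℝ) :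
    (1 / 2 : ℝ) * (v ⬝ᵥ (designMatrix φ ω).mulVec v)
      = 1 / 2 * ∑ j, ω j * (φ j 0 * v 0 + φ j 1 * v 1) ^ 2 := by
  congr 1
  simp only [designMatrix, Matrix.sum_mulVec, dotProduct_sum]
  refine Finset.sum_congr rfl fun j _ => ?_
  simp [Matrix.smul_mulVec, Matrix.mulVec, dotProduct, Fin.sum_univ_two, Matrix.vecMulVec_apply]
  ring

lemma half_design_quad_nonneg {K : ℕ} (φ : Fin K → Fin 2 → ℝ) (ω : Fin K → ℝ)
    (hω : ∀ j, 0 ≤ ω j) (v : Fin 2 → ℝ) :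
    0 ≤ (1 / 2 : ℝ) * (v ⬝ᵥ (designMatrix φ ω).mulVec v) := by
  rw [half_design_quad_eq_sum]
  have := Finset.sum_nonneg fun j (_ : j ∈ Finset.univ) =>
    mul_nonneg (hω j) (sq_nonneg (φ j 0 * v 0 + φ j 1 * v 1))
  positivity

lemma half_design_quad_expand {K : ℕ} (φ : Fin K → Fin 2 → ℝ) (ω : Fin K → ℝ) (v : Fin 2 → ℝ) :
    (1 / 2 : ℝ) * (v ⬝ᵥ (designMatrix φ ω).mulVec v)
      = 1 / 2 * ((∑ j, ω j * φ j 0 ^ 2) * v 0 ^ 2 + 2 * (∑ j, ω j * (φ j 0 * φ j 1)) * (v 0 * v 1)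
          + (∑ j, ω j * φ j 1 ^ 2) * v 1 ^ 2) := by
  rw [half_design_quad_eq_sum]
  congr 1
  simp only [Finset.mul_sum, Finset.sum_mul, ← Finset.sum_add_distrib]
  exact Finset.sum_congr rfl fun j _ => by ring

lemma Hinfo_le {K : ℕ} (φ : Fin K → Fin 2 → ℝ) (θ : Fin 2 → ℝ) (ω : Fin K → ℝ)
    (hω : ∀ j, 0 ≤ ω j) (k i : Fin K) (lam : Fin 2 → ℝ) (h : lam ⬝ᵥ φ i ≤ lam ⬝ᵥ φ k) :
    Hinfo φ θ ω k i ≤ (1 / 2 : ℝ) * ((θ - lam) ⬝ᵥ (designMatrix φ ω).mulVec (θ - lam)) := by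
  refine csInf_le ⟨0, ?_⟩ ⟨lam, h, rfl⟩
  rintro _ ⟨l, _, rfl⟩
  exact half_design_quad_nonneg φ ω hω _

/-- The bound along the half-plane `x - y ≥ ε` upgrades, by homogeneity and the sign of the cross
term `C`, to a bound by the `ℓ¹` norm on the whole plane. -/
lemma quad_lower (A B C ε : ℝ) (hε : 0 < ε) (hC : 0 ≤ C)
    (hnn : ∀ x y : ℝ, 0 ≤ 1 / 2 * (A * x ^ 2 + 2 * C * (x * y) + B * y ^ 2))
    (h : ∀ x y : ℝ, ε ≤ x - y → ε ^ 2 / 16 ≤ 1 / 2 * (A * x ^ 2 + 2 * C * (x * y) + B * y ^ 2))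
    (x y : ℝ) :
    (|x| + |y|) ^ 2 / 16 ≤ 1 / 2 * (A * x ^ 2 + 2 * C * (x * y) + B * y ^ 2) := by
  have key : ∀ x y : ℝ,
      (x - y) ^ 2 / 16 ≤ 1 / 2 * (A * x ^ 2 + 2 * C * (x * y) + B * y ^ 2) := by
    intro x y
    rcases eq_or_ne (x - y) 0 with h0 | h0
    · rw [h0]
      simpa using hnn x y
    · have h1 := h (ε / (x - y) * x) (ε / (x - y) * y) (by
        rw [← mul_sub, div_mul_cancel₀ _ h0])
      have h2 : 0 < (ε / (x - y)) ^ 2 := by positivity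
      have h3 : ε ^ 2 = (ε / (x - y)) ^ 2 * (x - y) ^ 2 := by field_simp
      rw [h3] at h1
      refine le_of_mul_le_mul_left ?_ h2
      linarith
  have hsq : (|x| + |y|) ^ 2 = x ^ 2 + 2 * |x * y| + y ^ 2 := by
    rw [abs_mul, ← sq_abs x, ← sq_abs y]
    ring
  rw [hsq]
  rcases le_total 0 (x * y) with hxy | hxy
  · rw [abs_of_nonneg hxy]
    have := key x (-y)
    nlinarith [mul_nonneg hC hxy]
  · rw [abs_of_nonpos hxy]
    have := key x y
    linarith

/-- On the example instance, any near-optimal allocation `ω` (one whose minimal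
information `min_{k≥2} H_k(ω,θ)` is at least `ε²/16`) gives, for every arm `k ≥ 3`,
information `H_k(ω,θ) ≥ (1−ε)²/16 ≥ 1/64`.
(Arms are 0-indexed: arm 1 ↦ index 0, arm 2 ↦ index 1, arms 3,…,K ↦ indices 2,…,K−1.) -/
theorem example_instance_easy_arms_low_regret
    (K : ℕ) (hK : 3 ≤ K) (ε : ℝ) (hε0 : 0 < ε) (hε : ε < 1 / 2)
    (φ : Fin K → Fin 2 → ℝ)
    (hφ0 : φ ⟨0, by omega⟩ = ![1, 0])
    (hφ1 : φ ⟨1, by omega⟩ = ![0, 1])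
    (hφk : ∀ k : Fin K, 2 ≤ (k : ℕ) →
      φ k 0 ∈ Set.Ioo (-1 : ℝ) 0 ∧ φ k 1 ∈ Set.Ioo (-1 : ℝ) 0 ∧
        (φ k 0) ^ 2 + (φ k 1) ^ 2 = 1)
    (θ : Fin 2 → ℝ) (hθ : θ = ![1, 1 - ε])
    (ω : Fin K → ℝ) (hω0 : ∀ k, 0 ≤ ω k) (hω1 : ∑ k : Fin K, ω k = 1)
    (hωopt : ∀ k : Fin K, 1 ≤ (k : ℕ) → ε ^ 2 / 16 ≤ Hinfo φ θ ω k ⟨0, by omega⟩)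
    (k : Fin K) (hk : 2 ≤ (k : ℕ)) :
    Hinfo φ θ ω k ⟨0, by omega⟩ ≥ (1 - ε) ^ 2 / 16
    ∧ (1 - ε) ^ 2 / 16 ≥ (1 : ℝ) / 64 := by
  refine ⟨?_, by nlinarith⟩
  have hC : 0 ≤ ∑ j, ω j * (φ j 0 * φ j 1) := by
    refine Finset.sum_nonneg fun j _ => mul_nonneg (hω0 j) ?_
    obtain ⟨j, hj⟩ := j
    match j, hj with
    | 0, hj => simp [hφ0]
    | 1, hj => simp [hφ1]
    | j + 2, hj =>
      obtain ⟨h1, h2, _⟩ := hφk ⟨j + 2, hj⟩ (by simp)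
      exact mul_nonneg_of_nonpos_of_nonpos h1.2.le h2.2.le
  have hq := quad_lower (∑ j, ω j * φ j 0 ^ 2) (∑ j, ω j * φ j 1 ^ 2) _ ε hε0 hC
    (fun x y => by
      have := half_design_quad_nonneg φ ω hω0 ![x, y]
      rw [half_design_quad_expand] at this
      simpa only [Matrix.cons_val_zero, Matrix.cons_val_one] using this)
    (fun x y hxy => by
      have h1 := (hωopt ⟨1, by omega⟩ le_rfl).trans
        (Hinfo_le φ θ ω hω0 _ _ ![1 - x, 1 - ε - y] (by
          rw [hφ0, hφ1]
          simp [dotProduct, Fin.sum_univ_two]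
          linarith))
      rw [half_design_quad_expand] at h1
      have e0 : (θ - ![1 - x, 1 - ε - y]) 0 = x := by simp [hθ]
      have e1 : (θ - ![1 - x, 1 - ε - y]) 1 = y := by simp [hθ]
      rwa [e0, e1] at h1)
  refine le_csInf ⟨_, 0, by simp, rfl⟩ ?_
  rintro _ ⟨lam, hlam, rfl⟩
  change _ ≤ (1 / 2 : ℝ) * ((θ - lam) ⬝ᵥ (designMatrix φ ω).mulVec (θ - lam))
  rw [half_design_quad_expand]
  refine le_trans ?_ (hq _ _)
  obtain ⟨⟨ha1, ha0⟩, ⟨hb1, hb0⟩, -⟩ := hφk k hk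
  have e0 : lam 0 = 1 - (θ - lam) 0 := by simp [hθ]
  have e1 : lam 1 = 1 - ε - (θ - lam) 1 := by simp [hθ]
  simp only [Set.mem_setOf_eq, hφ0, dotProduct, Fin.sum_univ_two, Matrix.cons_val_zero,
    Matrix.cons_val_one, mul_one, mul_zero, add_zero] at hlam
  rw [e0, e1] at hlam
  generalize (θ - lam) 0 = x at *
  generalize (θ - lam) 1 = y at *
  have hs : 1 ≤ |x| + |y| := by
    have hx := mul_le_mul_of_nonneg_left (le_abs_self x) (by linarith : 0 ≤ 1 - φ k 0)
    have hy := mul_le_mul_of_nonneg_left (le_abs_self y) (by linarith : 0 ≤ -φ k 1)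
    have hy' := mul_le_mul_of_nonneg_right (by linarith : -φ k 1 ≤ 1 - φ k 0) (abs_nonneg y)
    have hb := mul_nonneg (by linarith : 0 ≤ -φ k 1) (by linarith : 0 ≤ 1 - ε)
    refine le_of_mul_le_mul_left ?_ (by linarith : 0 < 1 - φ k 0)
    linarith
  nlinarith
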